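/- Let q be a complex number with |q| < 1 and let a, b, c, d, f be complex numbers with max{|a|,|b|,|c|,|d|,|f|} < 1. Then ∫₀^π h(cos θ; 1, -1, q^{1/2}, -q^{1/2}) / h(cos θ; a, b, c, d, f) dθ = [2π (abcd; q)_∞ (abcf; q)_∞ / ((q; q)_∞ (ab; q)_∞ (ac; q)_∞ (ad; q)_∞ (af; q)_∞ (bc; q)_∞ (bd; q)_∞ (bf; q)_∞ (cd; q)_∞ (cf; q)_∞)] · Σ_{k=0}^∞ [(ab; q)_k (ac; q)_k (bc; q)_k / ((q; q)_k (abcd; q)_k (abcf; q)_k)] (df)^k. (The Ismail–Stanton–Viennot integral.) -/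

import Mathlib

open Complex MeasureTheory

/-- The q-shifted factorial `(x; q)_∞ = ∏_{k=0}^∞ (1 - x q^k)`. -/
noncomputable def qp (q x : ℂ) : ℂ := ∏' k : ℕ, (1 - x * q ^ k)

/-- The finite q-shifted factorial `(x; q)_n = ∏_{k=0}^{n-1} (1 - x q^k)`. -/
noncomputable def qpn (q x : ℂ) (n : ℕ) : ℂ := ∏ k ∈ Finset.range n, (1 - x * q ^ k)

/-- For `x = cos θ`, `h(x; λ) = (λ e^{iθ}; q)_∞ (λ e^{-iθ}; q)_∞`. -/
noncomputable def hh (q : ℂ) (θ : ℝ) (l : ℂ) : ℂ :=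
  qp q (l * Complex.exp ((θ : ℂ) * Complex.I)) *
    qp q (l * Complex.exp (-((θ : ℂ) * Complex.I)))

/-!
Write the integrand as `W / (h(·; d) h(·; f))`. The elementary identity
`f (1 - 2 d x + d²) - d (1 - 2 f x + f²) = (f - d) (1 - d f)` gives a `q`-difference relation in
`(d, f)` for every such integral. Comparing Taylor coefficients at `d = 0`, a symmetric solution
that is holomorphic in the unit disc is determined by its values at `f = 0`, so each further
parameter is added by checking that the expected right-hand side solves the same relation. For
the product side of the Askey–Wilson integral this is algebra; for the `₃φ₂` the relation holds
term by term up to a telescoping difference.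

With one parameter, the integral does not depend on it: the increment under `a ↦ a q` is a contour
integral over `‖z‖ = 1` which moving to `‖z‖ = ‖q‖` and substituting `z ↦ q / z` turns into its
negative. The remaining constant is found from the parameters `q, -q, q^{1/2}, -q^{1/2}`, where the
integrand is `4 sin² θ`.
-/

open Filter Metric Topology

section QPochhammer

variable {q x : ℂ}

lemma norm_mul_lt_one {y : ℂ} (hx : ‖x‖ < 1) (hy : ‖y‖ < 1) : ‖x * y‖ < 1 := by
  rw [norm_mul]
  exact mul_lt_one_of_nonneg_of_lt_one_left (norm_nonneg x) hx hy.le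

lemma norm_mul_pow_lt_one (hq : ‖q‖ < 1) (hx : ‖x‖ < 1) (k : ℕ) : ‖x * q ^ k‖ < 1 := by
  rw [norm_mul, norm_pow]
  exact mul_lt_one_of_nonneg_of_lt_one_left (norm_nonneg x) hx (pow_le_one₀ (norm_nonneg q) hq.le)

lemma one_sub_ne_zero_of_norm_lt_one (hx : ‖x‖ < 1) : 1 - x ≠ 0 :=
  (isUnit_one_sub_of_norm_lt_one hx).ne_zero

lemma summable_norm_neg_mul_pow (hq : ‖q‖ < 1) (x : ℂ) :
    Summable fun k : ℕ => ‖-(x * q ^ k)‖ := by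
  simp only [norm_neg, norm_mul, norm_pow]
  exact (summable_geometric_of_lt_one (norm_nonneg q) hq).mul_left _

lemma multipliable_one_sub_mul_pow (hq : ‖q‖ < 1) (x : ℂ) :
    Multipliable fun k : ℕ => 1 - x * q ^ k := by
  simpa only [sub_eq_add_neg] using
    multipliable_one_add_of_summable (summable_norm_neg_mul_pow hq x)

lemma qp_zero_right (q : ℂ) : qp q 0 = 1 := by simp [qp]

lemma qpn_succ (q x : ℂ) (n : ℕ) : qpn q x (n + 1) = qpn q x n * (1 - x * q ^ n) :=
  Finset.prod_range_succ _ n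

lemma qp_eq_qpn_mul_qp (hq : ‖q‖ < 1) (x : ℂ) (n : ℕ) :
    qp q x = qpn q x n * qp q (x * q ^ n) := by
  have shift_factor (k : ℕ) : 1 - x * q ^ n * q ^ k = 1 - x * q ^ (k + n) := by ring
  have hmul := multipliable_one_sub_mul_pow hq (x * q ^ n)
  simp only [shift_factor] at hmul
  rw [qp, qp, tprod_congr shift_factor]
  exact (hmul.prod_mul_tprod_nat_mul' (f := fun k => 1 - x * q ^ k)).symm

lemma qp_eq_one_sub_mul_qp (hq : ‖q‖ < 1) (x : ℂ) : qp q x = (1 - x) * qp q (x * q) := by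
  simpa [qpn] using qp_eq_qpn_mul_qp hq x 1

lemma qp_ne_zero (hq : ‖q‖ < 1) (hx : ‖x‖ < 1) : qp q x ≠ 0 := by
  have hfactor (k : ℕ) : 1 + -(x * q ^ k) ≠ 0 := by
    rw [← sub_eq_add_neg]
    exact one_sub_ne_zero_of_norm_lt_one (norm_mul_pow_lt_one hq hx k)
  simpa only [qp, sub_eq_add_neg] using
    tprod_one_add_ne_zero_of_summable hfactor (summable_norm_neg_mul_pow hq x)

lemma qpn_ne_zero (hq : ‖q‖ < 1) (hx : ‖x‖ < 1) (n : ℕ) : qpn q x n ≠ 0 :=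
  Finset.prod_ne_zero_iff.2 fun k _ =>
    one_sub_ne_zero_of_norm_lt_one (norm_mul_pow_lt_one hq hx k)

lemma tendsto_qpn_qp (hq : ‖q‖ < 1) (x : ℂ) : Tendsto (qpn q x) atTop (𝓝 (qp q x)) :=
  (multipliable_one_sub_mul_pow hq x).hasProd.tendsto_prod_nat

lemma differentiable_qp (hq : ‖q‖ < 1) : Differentiable ℂ (qp q) := by
  intro x
  have hprod := Summable.hasProdLocallyUniformlyOn_nat_one_add
    (f := fun (k : ℕ) (y : ℂ) => -(y * q ^ k)) (K := ball 0 (‖x‖ + 1)) isOpen_ball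
    ((summable_geometric_of_lt_one (norm_nonneg q) hq).mul_left (‖x‖ + 1))
    (Eventually.of_forall fun k y hy => by
      simp only [norm_neg, norm_mul, norm_pow]
      gcongr
      exact (mem_ball_zero_iff.1 hy).le)
    (fun k => by fun_prop)
  have hdiff := hprod.tendstoLocallyUniformlyOn_finsetRange.differentiableOn
    (Eventually.of_forall fun n => by fun_prop) isOpen_ball
  simp only [← sub_eq_add_neg] at hdiff
  exact hdiff.differentiableAt (isOpen_ball.mem_nhds (by simp))

lemma qp_mul_qp_neg (hq : ‖q‖ < 1) (x : ℂ) : qp q x * qp q (-x) = qp (q ^ 2) (x ^ 2) := by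
  rw [qp, qp, qp, ← (multipliable_one_sub_mul_pow hq x).tprod_mul
    (multipliable_one_sub_mul_pow hq (-x))]
  exact tprod_congr fun k => by ring

lemma qp_sq_mul_qp_sq (hq : ‖q‖ < 1) (x : ℂ) :
    qp (q ^ 2) x * qp (q ^ 2) (x * q) = qp q x := by
  have hq2 : ‖q ^ 2‖ < 1 := by simpa only [pow_two] using norm_mul_lt_one hq hq
  have even_factor (k : ℕ) : 1 - x * (q ^ 2) ^ k = 1 - x * q ^ (2 * k) := by ring
  have odd_factor (k : ℕ) : 1 - x * q * (q ^ 2) ^ k = 1 - x * q ^ (2 * k + 1) := by ring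
  rw [qp, qp, qp, tprod_congr even_factor, tprod_congr odd_factor]
  exact tprod_even_mul_odd (f := fun k => 1 - x * q ^ k)
    ((multipliable_one_sub_mul_pow hq2 x).congr even_factor)
    ((multipliable_one_sub_mul_pow hq2 (x * q)).congr odd_factor)

/-- Euler's identity `(q; q²)_∞ (-q; q)_∞ = 1`, with the first factor split by `u = q^{1/2}`. -/
lemma qp_mul_qp_neg_mul_qp_neg_sq {u : ℂ} (hq : ‖q‖ < 1) (hu : u ^ 2 = q) :
    qp q u * qp q (-u) * qp q (-q) = 1 := by
  have hodd : qp q u * qp q (-u) = qp (q ^ 2) q := by rw [qp_mul_qp_neg hq, hu]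
  have hsplit : qp (q ^ 2) q * qp (q ^ 2) (q ^ 2) = qp q q := by
    rw [← qp_sq_mul_qp_sq hq q, pow_two]
  apply mul_right_cancel₀ (qp_ne_zero hq hq)
  calc qp q u * qp q (-u) * qp q (-q) * qp q q
      = qp (q ^ 2) q * (qp q q * qp q (-q)) := by rw [hodd]; ring
    _ = 1 * qp q q := by rw [qp_mul_qp_neg hq, hsplit, one_mul]

end QPochhammer

section ContiguousRelation

variable {q : ℂ}

/-- A symmetric function of two parameters in the unit disc, holomorphic in each of them, that
satisfies the first-order `q`-difference relation shared by the integrals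
`∫ W / (h(·; c) h(·; d))`, whatever the weight `W`. -/
structure IsContiguous (q : ℂ) (E : ℂ → ℂ → ℂ) : Prop where
  symm : ∀ c d, E c d = E d c
  differentiableOn : ∀ d, ‖d‖ < 1 → DifferentiableOn ℂ (fun c => E c d) (ball 0 1)
  relation : ∀ c d, ‖c‖ < 1 → ‖d‖ < 1 →
    d * E (c * q) d - c * E c (d * q) = (d - c) * (1 - c * d) * E c d

lemma IsContiguous.const_mul {E : ℂ → ℂ → ℂ} (hE : IsContiguous q E) (C : ℂ) :
    IsContiguous q fun c d => C * E c d where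
  symm c d := by rw [hE.symm]
  differentiableOn d hd := (hE.differentiableOn d hd).const_mul C
  relation c d hc hd := by linear_combination C * hE.relation c d hc hd

lemma IsContiguous.sub {E F : ℂ → ℂ → ℂ} (hE : IsContiguous q E) (hF : IsContiguous q F) :
    IsContiguous q fun c d => E c d - F c d where
  symm c d := by rw [hE.symm, hF.symm]
  differentiableOn d hd := (hE.differentiableOn d hd).sub (hF.differentiableOn d hd)
  relation c d hc hd := by
    linear_combination hE.relation c d hc hd - hF.relation c d hc hd

lemma apply_zero_eq_zero_of_qDifference {F G p : ℂ → ℂ} {r : ℂ} (hr : r ≠ 1)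
    (hF : ContinuousAt F 0) (hG : ContinuousAt G 0) (hp : ContinuousAt p 0) (hp0 : p 0 ≠ 0)
    (hrel : ∀ᶠ c in 𝓝[≠] 0, p 0 * (r * F (c * q)) - c * G c = p c * F c) : F 0 = 0 := by
  have hFscale : ContinuousAt (fun c => F (c * q)) 0 :=
    ContinuousAt.comp (by simpa using hF) (continuous_mul_const q).continuousAt
  have hleft : ContinuousAt (fun c => p 0 * (r * F (c * q)) - c * G c) 0 :=
    (continuousAt_const.mul (continuousAt_const.mul hFscale)).sub (continuousAt_id.mul hG)
  have hzero := ((hleft.eventuallyEq_nhds_iff_eventuallyEq_nhdsNE (hp.mul hF)).1 hrel).self_of_nhds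
  simp only [zero_mul, sub_zero, Pi.mul_apply] at hzero
  have hprod : p 0 * ((r - 1) * F 0) = 0 := by linear_combination hzero
  simpa [hp0, sub_ne_zero.2 hr] using hprod

lemma succ_le_analyticOrderAt_of_eventuallyEq_pow_mul {f F : ℂ → ℂ} {m : ℕ}
    (hf : AnalyticAt ℂ f 0) (hF : AnalyticAt ℂ F 0) (hF0 : F 0 = 0)
    (hfF : ∀ᶠ c in 𝓝 0, f c = c ^ m * F c) : (m + 1 : ℕ) ≤ analyticOrderAt f 0 := by
  obtain ⟨k, hk, hFk⟩ := (natCast_le_analyticOrderAt hF (n := 1)).1 <| by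
    rwa [Nat.cast_one, Order.one_le_iff_ne_zero, hF.analyticOrderAt_ne_zero]
  refine (natCast_le_analyticOrderAt hf).2 ⟨k, hk, ?_⟩
  filter_upwards [hfF, hFk] with c hfc hFc
  rw [hfc, hFc, sub_zero, smul_eq_mul, smul_eq_mul, pow_one, pow_succ, mul_assoc]

lemma succ_le_analyticOrderAt_of_qDifference {f g p : ℂ → ℂ} {m : ℕ} (hq : ‖q‖ < 1) (hm : m ≠ 0)
    (hf : AnalyticAt ℂ f 0) (hg : AnalyticAt ℂ g 0) (hp : ContinuousAt p 0) (hp0 : p 0 ≠ 0)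
    (hrel : ∀ᶠ c in 𝓝 0, p 0 * f (c * q) - c * g c = p c * f c)
    (hmf : m ≤ analyticOrderAt f 0) (hmg : m ≤ analyticOrderAt g 0) :
    (m + 1 : ℕ) ≤ analyticOrderAt f 0 := by
  obtain ⟨F, hF, hfF⟩ := (natCast_le_analyticOrderAt hf).1 hmf
  obtain ⟨G, hG, hgG⟩ := (natCast_le_analyticOrderAt hg).1 hmg
  simp only [sub_zero, smul_eq_mul] at hfF hgG
  have hqm : q ^ m ≠ 1 := fun h => by simpa [← norm_pow, h] using pow_lt_one₀ (norm_nonneg q) hq hm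
  have hscale : Tendsto (fun c : ℂ => c * q) (𝓝 0) (𝓝 0) := by
    simpa using (continuous_mul_const q).tendsto 0
  have hrelF : ∀ᶠ c in 𝓝[≠] 0, p 0 * (q ^ m * F (c * q)) - c * G c = p c * F c := by
    filter_upwards [nhdsWithin_le_nhds hrel, nhdsWithin_le_nhds hfF, nhdsWithin_le_nhds hgG,
      nhdsWithin_le_nhds (hscale.eventually hfF), self_mem_nhdsWithin] with c hc hfc hgc hfqc hc0
    rw [hfc, hgc, hfqc] at hc
    apply mul_left_cancel₀ (pow_ne_zero m hc0)
    linear_combination hc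
  exact succ_le_analyticOrderAt_of_eventuallyEq_pow_mul hf hF
    (apply_zero_eq_zero_of_qDifference hqm hF.continuousAt hG.continuousAt hp hp0 hrelF) hfF

lemma IsContiguous.succ_le_analyticOrderAt {E : ℂ → ℂ → ℂ} (hE : IsContiguous q E) (hq : ‖q‖ < 1)
    (hE0 : ∀ c, ‖c‖ < 1 → E c 0 = 0) (m : ℕ) :
    ∀ d, ‖d‖ < 1 → (m + 1 : ℕ) ≤ analyticOrderAt (fun c => E c d) 0 := by
  have hball : ball (0 : ℂ) 1 ∈ 𝓝 0 := ball_mem_nhds 0 one_pos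
  have hanalytic (d : ℂ) (hd : ‖d‖ < 1) : AnalyticAt ℂ (fun c => E c d) 0 :=
    (hE.differentiableOn d hd).analyticAt hball
  induction m with
  | zero =>
    intro d hd
    rw [zero_add, Nat.cast_one, Order.one_le_iff_ne_zero,
      (hanalytic d hd).analyticOrderAt_ne_zero, hE.symm, hE0 d hd]
  | succ m ih =>
    intro d hd
    rcases eq_or_ne d 0 with rfl | hd0
    · have hvanish : ∀ᶠ c in 𝓝 0, E c 0 = 0 := by
        filter_upwards [hball] with c hc using hE0 c (mem_ball_zero_iff.1 hc)
      rw [analyticOrderAt_eq_top.2 hvanish]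
      exact le_top
    · have hdq := norm_mul_lt_one hd hq
      refine succ_le_analyticOrderAt_of_qDifference (p := fun c => (d - c) * (1 - c * d)) hq
        m.succ_ne_zero (hanalytic d hd) (hanalytic (d * q) hdq) (by fun_prop) (by simpa using hd0)
        ?_ (ih d hd) (ih (d * q) hdq)
      filter_upwards [hball] with c hc
      simpa using hE.relation c d (mem_ball_zero_iff.1 hc) hd

lemma IsContiguous.eq_zero {E : ℂ → ℂ → ℂ} (hE : IsContiguous q E) (hq : ‖q‖ < 1)
    (hE0 : ∀ c, ‖c‖ < 1 → E c 0 = 0) {c d : ℂ} (hc : ‖c‖ < 1) (hd : ‖d‖ < 1) : E c d = 0 := by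
  have horder : analyticOrderAt (fun c => E c d) 0 = ⊤ := ENat.eq_top_iff_forall_ge.2 fun m =>
    (Nat.cast_le.2 m.le_succ).trans (hE.succ_le_analyticOrderAt hq hE0 m d hd)
  exact ((hE.differentiableOn d hd).analyticOnNhd isOpen_ball)
    |>.eqOn_zero_of_preconnected_of_eventuallyEq_zero (convex_ball 0 1).isPreconnected
      (mem_ball_self one_pos) (analyticOrderAt_eq_top.1 horder) (mem_ball_zero_iff.2 hc)

theorem IsContiguous.eq_of_eq_apply_zero {E F : ℂ → ℂ → ℂ} (hE : IsContiguous q E)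
    (hF : IsContiguous q F) (hq : ‖q‖ < 1) (h0 : ∀ c, ‖c‖ < 1 → E c 0 = F c 0) {c d : ℂ}
    (hc : ‖c‖ < 1) (hd : ‖d‖ < 1) : E c d = F c d :=
  sub_eq_zero.1 <| (hE.sub hF).eq_zero hq (fun c hc => sub_eq_zero.2 (h0 c hc)) hc hd

lemma contiguous_relation_div {N : ℂ → ℂ → ℂ} {P p : ℂ → ℂ} {c d : ℂ}
    (hPc : P c = p c * P (c * q)) (hPd : P d = p d * P (d * q)) (hc : P c ≠ 0) (hd : P d ≠ 0)
    (hN : d * p c * N (c * q) d - c * p d * N c (d * q) = (d - c) * (1 - c * d) * N c d) :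
    d * (N (c * q) d / (P (c * q) * P d)) - c * (N c (d * q) / (P c * P (d * q)))
      = (d - c) * (1 - c * d) * (N c d / (P c * P d)) := by
  have hpc : p c ≠ 0 := left_ne_zero_of_mul (hPc ▸ hc)
  have hpd : p d ≠ 0 := left_ne_zero_of_mul (hPd ▸ hd)
  have hPcq : P (c * q) ≠ 0 := right_ne_zero_of_mul (hPc ▸ hc)
  have hPdq : P (d * q) ≠ 0 := right_ne_zero_of_mul (hPd ▸ hd)
  rw [← mul_div_assoc _ (N c d), ← hN, hPc, hPd]
  field_simp

end ContiguousRelation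

section ParametricIntegral

variable {E : Type*} [NormedAddCommGroup E] [NormedSpace ℂ E]

lemma aestronglyMeasurable_deriv_of_eventually {α : Type*} [MeasurableSpace α] {μ : Measure α}
    {F : ℂ → α → E} {z₀ : ℂ} (hmeas : ∀ᶠ z in 𝓝 z₀, AEStronglyMeasurable (F z) μ)
    (hdiff : ∀ᵐ t ∂μ, DifferentiableAt ℂ (fun z => F z t) z₀) :
    AEStronglyMeasurable (fun t => deriv (fun z => F z t) z₀) μ := by
  have hslope : ∀ᶠ z in 𝓝[≠] z₀, AEStronglyMeasurable (fun t => slope (fun w => F w t) z₀ z) μ := by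
    filter_upwards [nhdsWithin_le_nhds hmeas] with z hz
    exact (hz.sub hmeas.self_of_nhds).const_smul (z - z₀)⁻¹
  obtain ⟨z, hz, hzmeas⟩ := exists_seq_forall_of_frequently hslope.frequently
  refine aestronglyMeasurable_of_tendsto_ae atTop hzmeas ?_
  filter_upwards [hdiff] with t ht
  exact ht.hasDerivAt.tendsto_slope.comp hz

lemma norm_deriv_le_of_forall_closedBall_norm_le {f : ℂ → E} {z₀ z : ℂ} {r C : ℝ}
    (hf : DifferentiableOn ℂ f (closedBall z₀ (r + r)))
    (hC : ∀ w ∈ closedBall z₀ (r + r), ‖f w‖ ≤ C) (hz : z ∈ ball z₀ r) : ‖deriv f z‖ ≤ C / r := by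
  have hsub : closedBall z r ⊆ closedBall z₀ (r + r) :=
    closedBall_subset_closedBall' (by gcongr; exact (mem_ball.1 hz).le)
  exact norm_deriv_le_of_forall_mem_sphere_norm_le (pos_of_mem_ball hz)
    ((hf.mono hsub).diffContOnCl_ball subset_rfl)
    fun w hw => hC w (hsub (sphere_subset_closedBall hw))

theorem differentiableOn_intervalIntegral {F : ℂ → ℝ → E} {U : Set ℂ} {a b : ℝ} (hU : IsOpen U)
    (hcont : ContinuousOn (Function.uncurry F) (U ×ˢ Set.uIcc a b))
    (hdiff : ∀ t ∈ Set.uIcc a b, DifferentiableOn ℂ (fun z => F z t) U) :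
    DifferentiableOn ℂ (fun z => ∫ t in a..b, F z t) U := by
  intro z₀ hz₀
  obtain ⟨ε, hε, hball⟩ := nhds_basis_closedBall.mem_iff.1 (hU.mem_nhds hz₀)
  obtain ⟨r, rfl⟩ : ∃ r, ε = r + r := ⟨ε / 2, (add_halves ε).symm⟩
  have hr : 0 < r := by linarith
  obtain ⟨C, hC⟩ := ((isCompact_closedBall z₀ (r + r)).prod
    isCompact_uIcc).exists_bound_of_continuousOn (hcont.mono (Set.prod_mono hball subset_rfl))
  have hcont_z (z : ℂ) (hz : z ∈ U) : ContinuousOn (F z) (Set.uIcc a b) :=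
    hcont.comp (f := fun t => (z, t)) (by fun_prop) fun t ht => ⟨hz, ht⟩
  have hmeas : ∀ᶠ z in 𝓝 z₀, AEStronglyMeasurable (F z) (volume.restrict (Set.uIoc a b)) := by
    filter_upwards [hU.mem_nhds hz₀] with z hz
    exact ((hcont_z z hz).mono Set.uIoc_subset_uIcc).aestronglyMeasurable measurableSet_uIoc
  have hderiv (t : ℝ) (ht : t ∈ Set.uIoc a b) (z : ℂ) (hz : z ∈ U) :
      DifferentiableAt ℂ (fun z => F z t) z :=
    (hdiff t (Set.uIoc_subset_uIcc ht)).differentiableAt (hU.mem_nhds hz)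
  refine (intervalIntegral.hasDerivAt_integral_of_dominated_loc_of_deriv_le
    (F' := fun z t => deriv (fun z => F z t) z) (s := ball z₀ r) (bound := fun _ => C / r)
    (ball_mem_nhds z₀ hr) hmeas (hcont_z z₀ hz₀).intervalIntegrable
    (aestronglyMeasurable_deriv_of_eventually hmeas ?_) ?_ intervalIntegrable_const
    ?_).2.differentiableAt.differentiableWithinAt
  · filter_upwards [ae_restrict_mem measurableSet_uIoc] with t ht using hderiv t ht z₀ hz₀
  · refine Eventually.of_forall fun t ht z hz => ?_
    have ht' := Set.uIoc_subset_uIcc ht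
    exact norm_deriv_le_of_forall_closedBall_norm_le ((hdiff t ht').mono hball)
      (fun w hw => hC (w, t) ⟨hw, ht'⟩) hz
  · refine Eventually.of_forall fun t ht z hz => (hderiv t ht z (hball ?_)).hasDerivAt
    exact ball_subset_closedBall (ball_subset_ball (by linarith) hz)

end ParametricIntegral

section CircleAverage

variable {E : Type*} [NormedAddCommGroup E] [NormedSpace ℂ E]

lemma circleAverage_eq_circleAverage_of_differentiableAt_annulus {f : ℂ → E} {r R : ℝ}
    (hr : 0 < r) (hrR : r ≤ R) (hf : ∀ z, r ≤ ‖z‖ → ‖z‖ ≤ R → DifferentiableAt ℂ f z) :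
    Real.circleAverage f 0 R = Real.circleAverage f 0 r := by
  rw [Real.circleAverage_eq_circleIntegral (hr.trans_le hrR).ne',
    Real.circleAverage_eq_circleIntegral hr.ne',
    circleIntegral_sub_center_inv_smul_eq_of_differentiable_on_annulus_off_countable hr hrR
      Set.countable_empty]
  · rintro z ⟨hzR, hzr⟩
    rw [mem_closedBall_zero_iff] at hzR
    rw [mem_ball_zero_iff, not_lt] at hzr
    exact (hf z hzr hzR).continuousAt.continuousWithinAt
  · rintro z ⟨⟨hzR, hzr⟩, -⟩
    rw [mem_ball_zero_iff] at hzR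
    rw [mem_closedBall_zero_iff, not_le] at hzr
    exact hf z hzr.le hzR.le

lemma circleAverage_comp_const_mul (f : ℂ → E) (u : ℂ) :
    Real.circleAverage (fun z => f (u * z)) 0 1 = Real.circleAverage f 0 ‖u‖ := by
  rw [Real.circleAverage_eq_integral_add (f := f) u.arg, Real.circleAverage_def]
  congr 2 with θ
  congr 1
  conv_lhs => rw [← norm_mul_exp_arg_mul_I u]
  simp only [circleMap_zero, ofReal_add, ofReal_one, add_mul, Complex.exp_add]
  ring

lemma integral_add_inv_eq_smul_circleAverage {f : ℂ → E} (hf : CircleIntegrable f 0 1) :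
    ∫ θ in (0 : ℝ)..Real.pi, (f (exp (θ * I)) + f (exp (-(θ * I))))
      = (2 * Real.pi) • Real.circleAverage f 0 1 := by
  let g : ℝ → E := fun θ => f (circleMap 0 1 θ)
  have hexp (θ : ℝ) : f (exp (θ * I)) = g θ := by simp [g, circleMap]
  have hexp_neg (θ : ℝ) : f (exp (-(θ * I))) = g (2 * Real.pi - θ) := by
    simp [g, circleMap, sub_mul, Complex.exp_sub, Complex.exp_neg]
  have hpi : Real.pi ∈ Set.uIcc 0 (2 * Real.pi) := by
    rw [Set.uIcc_of_le Real.two_pi_pos.le]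
    constructor <;> linarith [Real.pi_pos]
  obtain ⟨hupper, hlower⟩ := (IntervalIntegrable.trans_iff hpi).1 hf
  have hreflect : IntervalIntegrable (fun θ => g (2 * Real.pi - θ)) volume 0 Real.pi := by
    simpa [two_mul] using (hlower.comp_sub_left (2 * Real.pi)).symm
  have hlower_eq : ∫ θ in (0 : ℝ)..Real.pi, g (2 * Real.pi - θ)
      = ∫ θ in Real.pi..(2 * Real.pi), g θ := by
    rw [intervalIntegral.integral_comp_sub_left, sub_zero, two_mul, add_sub_cancel_right]
  simp only [hexp, hexp_neg]
  rw [intervalIntegral.integral_add hupper hreflect, hlower_eq,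
    intervalIntegral.integral_add_adjacent_intervals hupper hlower, Real.circleAverage_def,
    smul_inv_smul₀ Real.two_pi_pos.ne']

end CircleAverage

section ContiguousIntegral

variable {q : ℂ}

lemma hh_zero (q : ℂ) (θ : ℝ) : hh q θ 0 = 1 := by simp [hh, qp_zero_right]

lemma hh_ne_zero {c : ℂ} (hq : ‖q‖ < 1) (hc : ‖c‖ < 1) (θ : ℝ) : hh q θ c ≠ 0 := by
  refine mul_ne_zero (qp_ne_zero hq ?_) (qp_ne_zero hq ?_)
  · rwa [norm_mul, norm_exp_ofReal_mul_I, mul_one]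
  · rwa [norm_mul, ← neg_mul, ← ofReal_neg, norm_exp_ofReal_mul_I, mul_one]

lemma hh_eq_mul_hh (hq : ‖q‖ < 1) (θ : ℝ) (c : ℂ) :
    hh q θ c = (1 - 2 * c * cos θ + c ^ 2) * hh q θ (c * q) := by
  have hinv : exp (θ * I) * exp (-(θ * I)) = 1 := by
    rw [← Complex.exp_add, add_neg_cancel, exp_zero]
  rw [hh, hh, qp_eq_one_sub_mul_qp hq (c * exp (θ * I)),
    qp_eq_one_sub_mul_qp hq (c * exp (-(θ * I))), mul_right_comm c _ q, mul_right_comm c _ q,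
    Complex.cos, neg_mul]
  linear_combination (c ^ 2 * qp q (c * q * exp (θ * I)) * qp q (c * q * exp (-(θ * I)))) * hinv

lemma continuous_uncurry_hh (hq : ‖q‖ < 1) : Continuous fun p : ℂ × ℝ => hh q p.2 p.1 := by
  have := (differentiable_qp hq).continuous
  unfold hh
  fun_prop

lemma continuous_hh (hq : ‖q‖ < 1) (c : ℂ) : Continuous fun θ : ℝ => hh q θ c := by
  have := (differentiable_qp hq).continuous
  unfold hh
  fun_prop

lemma differentiable_hh (hq : ‖q‖ < 1) (θ : ℝ) : Differentiable ℂ (hh q θ) := by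
  have := differentiable_qp hq
  unfold hh
  fun_prop

lemma differentiableOn_integral_div_hh {V : ℝ → ℂ} (hq : ‖q‖ < 1) (hV : Continuous V) (s t : ℝ) :
    DifferentiableOn ℂ (fun c => ∫ θ in s..t, V θ / hh q θ c) (ball 0 1) := by
  refine differentiableOn_intervalIntegral isOpen_ball ?_ fun θ _ => ?_
  · exact (hV.comp continuous_snd).continuousOn.div (continuous_uncurry_hh hq).continuousOn
      fun p hp => hh_ne_zero hq (mem_ball_zero_iff.1 hp.1) p.2
  · exact (differentiableOn_const _).div (differentiable_hh hq θ).differentiableOn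
      fun c hc => hh_ne_zero hq (mem_ball_zero_iff.1 hc) θ

lemma continuous_div_hh {V : ℝ → ℂ} {c : ℂ} (hq : ‖q‖ < 1) (hV : Continuous V) (hc : ‖c‖ < 1) :
    Continuous fun θ => V θ / hh q θ c :=
  hV.div (continuous_hh hq c) (hh_ne_zero hq hc)

theorem isContiguous_integral_div_hh_mul_hh {W : ℝ → ℂ} (hq : ‖q‖ < 1) (hW : Continuous W)
    (s t : ℝ) : IsContiguous q fun c d => ∫ θ in s..t, W θ / (hh q θ c * hh q θ d) where
  symm c d := by simp only [mul_comm]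
  differentiableOn d hd := by
    simpa only [div_div, mul_comm] using
      differentiableOn_integral_div_hh hq (continuous_div_hh hq hW hd) s t
  relation c d hc hd := by
    have hintegrable {x y : ℂ} (hx : ‖x‖ < 1) (hy : ‖y‖ < 1) :
        IntervalIntegrable (fun θ => W θ / (hh q θ x * hh q θ y)) volume s t := by
      simpa only [div_div] using
        (continuous_div_hh hq (continuous_div_hh hq hW hx) hy).intervalIntegrable s t
    simp only [← intervalIntegral.integral_const_mul]
    rw [← intervalIntegral.integral_sub
      ((hintegrable (norm_mul_lt_one hc hq) hd).const_mul d)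
      ((hintegrable hc (norm_mul_lt_one hd hq)).const_mul c)]
    refine intervalIntegral.integral_congr fun θ _ => ?_
    exact contiguous_relation_div (N := fun _ _ => W θ) (p := fun c => 1 - 2 * c * cos θ + c ^ 2)
      (hh_eq_mul_hh hq θ c) (hh_eq_mul_hh hq θ d) (hh_ne_zero hq hc θ) (hh_ne_zero hq hd θ)
      (by ring)

lemma integral_div_hh_mul_hh_eq {W : ℝ → ℂ} {s t : ℝ} {S : ℂ → ℂ → ℂ} (hq : ‖q‖ < 1)
    (hW : Continuous W) (hS : IsContiguous q S)
    (h0 : ∀ c, ‖c‖ < 1 → ∫ θ in s..t, W θ / hh q θ c = S c 0) {c d : ℂ} (hc : ‖c‖ < 1)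
    (hd : ‖d‖ < 1) : ∫ θ in s..t, W θ / (hh q θ c * hh q θ d) = S c d :=
  (isContiguous_integral_div_hh_mul_hh hq hW s t).eq_of_eq_apply_zero hS hq
    (fun c hc => by simpa only [hh_zero, mul_one] using h0 c hc) hc hd

end ContiguousIntegral

section ContourShift

variable {q a : ℂ}

/-- The numerator `(e^{2iθ}; q)_∞ (e^{-2iθ}; q)_∞` of the Askey–Wilson integrand. -/
noncomputable def askeyWilsonWeight (q : ℂ) (θ : ℝ) : ℂ :=
  qp q (exp (θ * I) ^ 2) * qp q (exp (-(θ * I)) ^ 2)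

lemma continuous_askeyWilsonWeight (hq : ‖q‖ < 1) : Continuous (askeyWilsonWeight q) := by
  have := (differentiable_qp hq).continuous
  unfold askeyWilsonWeight
  fun_prop

lemma hh_mul_hh_neg_mul_hh_mul_hh_neg {u : ℂ} (hq : ‖q‖ < 1) (hu : u ^ 2 = q) (θ : ℝ) :
    hh q θ 1 * hh q θ (-1) * hh q θ u * hh q θ (-u) = askeyWilsonWeight q θ := by
  have hsplit (z : ℂ) : qp q z * qp q (-z) * (qp q (u * z) * qp q (-(u * z))) = qp q (z ^ 2) := by
    rw [qp_mul_qp_neg hq, qp_mul_qp_neg hq, mul_pow, hu, mul_comm q, qp_sq_mul_qp_sq hq]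
  rw [askeyWilsonWeight, ← hsplit, ← hsplit]
  simp only [hh, one_mul, neg_mul]
  ring

/-- A function whose symmetrization under `z ↦ z⁻¹` is the increment of the Askey–Wilson integrand
under `a ↦ a * q` up to a constant factor, and which is antisymmetric under `z ↦ q / z`. -/
noncomputable def shiftKernel (q a z : ℂ) : ℂ :=
  z * (z ^ 2 - 1) * (qp q (q * z ^ 2) * qp q (q * (z ^ 2)⁻¹)) /
    (qp q (a * z) * qp q (a * (q * z⁻¹)))

lemma differentiableAt_shiftKernel {z : ℂ} (hq : ‖q‖ < 1) (ha : ‖a‖ < 1) (hz0 : z ≠ 0)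
    (hqz : ‖q‖ ≤ ‖z‖) (hz1 : ‖z‖ ≤ 1) : DifferentiableAt ℂ (shiftKernel q a) z := by
  have hqz1 : ‖q * z⁻¹‖ ≤ 1 := by
    rw [← div_eq_mul_inv, norm_div]
    exact div_le_one_of_le₀ hqz (norm_nonneg z)
  have hden {w : ℂ} (hw : ‖w‖ ≤ 1) : qp q (a * w) ≠ 0 := qp_ne_zero hq <| by
    rw [norm_mul]
    exact mul_lt_one_of_nonneg_of_lt_one_left (norm_nonneg a) ha hw
  have := differentiable_qp hq
  unfold shiftKernel
  refine DifferentiableAt.div ?_ ?_ (mul_ne_zero (hden hz1) (hden hqz1))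
  · fun_prop (disch := simpa using hz0)
  · fun_prop (disch := simpa using hz0)

lemma circleIntegrable_shiftKernel (hq : ‖q‖ < 1) (ha : ‖a‖ < 1) :
    CircleIntegrable (shiftKernel q a) 0 1 := by
  refine ContinuousOn.circleIntegrable zero_le_one fun z hz => ?_
  have hz1 : ‖z‖ = 1 := mem_sphere_zero_iff_norm.1 hz
  exact (differentiableAt_shiftKernel hq ha (norm_ne_zero_iff.1 (by simp [hz1])) (hz1 ▸ hq.le)
    hz1.le).continuousAt.continuousWithinAt

lemma shiftKernel_mul_inv {z : ℂ} (hq : ‖q‖ < 1) (hq0 : q ≠ 0) (hz : z ≠ 0) :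
    shiftKernel q a (q * z⁻¹) = -shiftKernel q a z := by
  have hnum : qp q (q * ((q * z⁻¹) ^ 2)⁻¹)
      = (1 - z ^ 2 / q) * ((1 - z ^ 2) * qp q (q * z ^ 2)) := by
    rw [show q * ((q * z⁻¹) ^ 2)⁻¹ = z ^ 2 / q by field_simp, qp_eq_one_sub_mul_qp hq (z ^ 2 / q),
      div_mul_cancel₀ _ hq0, qp_eq_one_sub_mul_qp hq (z ^ 2), mul_comm (z ^ 2) q]
  have hnum' : qp q (q * (z ^ 2)⁻¹)
      = (1 - q * (z ^ 2)⁻¹) * ((1 - (q * z⁻¹) ^ 2) * qp q (q * (q * z⁻¹) ^ 2)) := by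
    rw [qp_eq_one_sub_mul_qp hq (q * (z ^ 2)⁻¹),
      show q * (z ^ 2)⁻¹ * q = (q * z⁻¹) ^ 2 by field_simp,
      qp_eq_one_sub_mul_qp hq ((q * z⁻¹) ^ 2), mul_comm _ q]
  have hden : q * (q * z⁻¹)⁻¹ = z := by field_simp
  rw [shiftKernel, shiftKernel, hnum, hnum', hden, mul_comm (qp q (a * (q * z⁻¹))), ← neg_div]
  congr 1
  field_simp
  ring

lemma shiftKernel_add_shiftKernel_inv {z : ℂ} (hq : ‖q‖ < 1) (ha : ‖a‖ < 1) (hz : ‖z‖ = 1) :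
    shiftKernel q a z + shiftKernel q a z⁻¹
      = (a - z - z⁻¹) * (qp q (z ^ 2) * qp q (z⁻¹ ^ 2)) / (qp q (a * z) * qp q (a * z⁻¹)) := by
  have hz0 : z ≠ 0 := norm_ne_zero_iff.1 (by simp [hz])
  have haz : ‖a * z‖ < 1 := by rwa [norm_mul, hz, mul_one]
  have haz' : ‖a * z⁻¹‖ < 1 := by rwa [norm_mul, norm_inv, hz, inv_one, mul_one]
  have hker {w : ℂ} (hw : ‖a * w⁻¹‖ < 1) : shiftKernel q a w
      = w * (w ^ 2 - 1) * (1 - a * w⁻¹) * (qp q (q * w ^ 2) * qp q (q * (w ^ 2)⁻¹)) /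
        (qp q (a * w) * qp q (a * w⁻¹)) := by
    rw [shiftKernel, qp_eq_one_sub_mul_qp hq (a * w⁻¹), mul_assoc a w⁻¹ q, mul_comm w⁻¹ q,
      ← mul_div_mul_right _ _ (one_sub_ne_zero_of_norm_lt_one hw)]
    congr 1 <;> ring
  rw [hker haz', hker (by rwa [inv_inv]), inv_inv, mul_comm (qp q (a * z⁻¹)), ← add_div,
    qp_eq_one_sub_mul_qp hq (z ^ 2), qp_eq_one_sub_mul_qp hq (z⁻¹ ^ 2), mul_comm (z ^ 2) q,
    mul_comm (z⁻¹ ^ 2) q, inv_pow, inv_inv]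
  congr 1
  field_simp
  ring

lemma circleAverage_shiftKernel_zero_left (ha : ‖a‖ < 1) :
    Real.circleAverage (shiftKernel 0 a) 0 1 = 0 := by
  have hker (z : ℂ) : shiftKernel 0 a z = z * (z ^ 2 - 1) / qp 0 (a * z) := by
    simp [shiftKernel, qp_zero_right]
  have hdiff : DifferentiableOn ℂ (shiftKernel 0 a) (closedBall 0 1) := by
    have := differentiable_qp (q := 0) (by simp)
    simp only [funext hker]
    refine DifferentiableOn.div (by fun_prop) (by fun_prop) fun z hz => ?_
    refine qp_ne_zero (by simp) ?_
    rw [norm_mul]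
    exact mul_lt_one_of_nonneg_of_lt_one_left (norm_nonneg a) ha (mem_closedBall_zero_iff.1 hz)
  rw [DiffContOnCl.circleAverage, hker, zero_mul, zero_div]
  rw [abs_one]
  exact hdiff.diffContOnCl_ball subset_rfl

theorem circleAverage_shiftKernel (hq : ‖q‖ < 1) (ha : ‖a‖ < 1) :
    Real.circleAverage (shiftKernel q a) 0 1 = 0 := by
  rcases eq_or_ne q 0 with rfl | hq0
  · exact circleAverage_shiftKernel_zero_left ha
  have hqpos : 0 < ‖q‖ := norm_pos_iff.2 hq0
  refine self_eq_neg.1 ?_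
  calc Real.circleAverage (shiftKernel q a) 0 1
      = Real.circleAverage (shiftKernel q a) 0 ‖q‖ :=
        circleAverage_eq_circleAverage_of_differentiableAt_annulus hqpos hq.le fun z hqz hz1 =>
          differentiableAt_shiftKernel hq ha (norm_pos_iff.1 (hqpos.trans_le hqz)) hqz hz1
    _ = Real.circleAverage (fun z => shiftKernel q a (q * z⁻¹)) 0 1 := by
        rw [Real.circleAverage_zero_one_congr_inv (f := fun z => shiftKernel q a (q * z)),
          circleAverage_comp_const_mul]
    _ = Real.circleAverage (fun z => (-1 : ℝ) • shiftKernel q a z) 0 1 := by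
        refine Real.circleAverage_congr_sphere fun z hz => ?_
        have hz0 : z ≠ 0 := ne_of_mem_sphere hz (by simp)
        simp [shiftKernel_mul_inv hq hq0 hz0]
    _ = -Real.circleAverage (shiftKernel q a) 0 1 := by
        rw [Real.circleAverage_fun_smul, neg_one_smul]

lemma askeyWilsonWeight_div_hh_mul_sub (hq : ‖q‖ < 1) (ha : ‖a‖ < 1) (θ : ℝ) :
    askeyWilsonWeight q θ / hh q θ (a * q) - askeyWilsonWeight q θ / hh q θ a
      = a * (shiftKernel q a (exp (θ * I)) + shiftKernel q a (exp (-(θ * I)))) := by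
  have hhaq := hh_ne_zero hq (norm_mul_lt_one ha hq) θ
  have hfactor : 1 - 2 * a * cos θ + a ^ 2 ≠ 0 :=
    left_ne_zero_of_mul (hh_eq_mul_hh hq θ a ▸ hh_ne_zero hq ha θ)
  have hcos : a * (a - exp (θ * I) - exp (-(θ * I))) = 1 - 2 * a * cos θ + a ^ 2 - 1 := by
    rw [Complex.cos, neg_mul]
    ring
  rw [Complex.exp_neg, shiftKernel_add_shiftKernel_inv hq ha (norm_exp_ofReal_mul_I θ),
    ← Complex.exp_neg, ← askeyWilsonWeight, ← hh, mul_div_assoc, ← mul_assoc a, hcos,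
    hh_eq_mul_hh hq θ a]
  generalize 1 - 2 * a * cos θ + a ^ 2 = p at hfactor
  field_simp

lemma integral_askeyWilsonWeight_div_hh_mul (hq : ‖q‖ < 1) (ha : ‖a‖ < 1) :
    ∫ θ in (0 : ℝ)..Real.pi, askeyWilsonWeight q θ / hh q θ (a * q)
      = ∫ θ in (0 : ℝ)..Real.pi, askeyWilsonWeight q θ / hh q θ a := by
  have hintegrable {c : ℂ} (hc : ‖c‖ < 1) :=
    (continuous_div_hh hq (continuous_askeyWilsonWeight hq) hc).intervalIntegrable
      (μ := volume) 0 Real.pi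
  rw [← sub_eq_zero, ← intervalIntegral.integral_sub (hintegrable (norm_mul_lt_one ha hq))
    (hintegrable ha)]
  simp only [askeyWilsonWeight_div_hh_mul_sub hq ha]
  rw [intervalIntegral.integral_const_mul,
    integral_add_inv_eq_smul_circleAverage (circleIntegrable_shiftKernel hq ha),
    circleAverage_shiftKernel hq ha, smul_zero, mul_zero]

lemma eq_apply_zero_of_apply_mul_eq {f : ℂ → ℂ} (hq : ‖q‖ < 1) (hf : ContinuousAt f 0)
    (hfq : ∀ x, ‖x‖ < 1 → f (x * q) = f x) (ha : ‖a‖ < 1) : f a = f 0 := by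
  have hconst (n : ℕ) : f (a * q ^ n) = f a := by
    induction n with
    | zero => simp
    | succ n ih => rw [pow_succ, ← mul_assoc, hfq _ (norm_mul_pow_lt_one hq ha n), ih]
  have htend : Tendsto (fun n : ℕ => a * q ^ n) atTop (𝓝 0) := by
    simpa using (tendsto_pow_atTop_nhds_zero_of_norm_lt_one hq).const_mul a
  have hlim := hf.tendsto.comp htend
  simp only [Function.comp_def, hconst] at hlim
  exact tendsto_nhds_unique tendsto_const_nhds hlim

theorem integral_askeyWilsonWeight_div_hh (hq : ‖q‖ < 1) (ha : ‖a‖ < 1) :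
    ∫ θ in (0 : ℝ)..Real.pi, askeyWilsonWeight q θ / hh q θ a
      = ∫ θ in (0 : ℝ)..Real.pi, askeyWilsonWeight q θ := by
  have hcont := (differentiableOn_integral_div_hh hq (continuous_askeyWilsonWeight hq) 0
    Real.pi).continuousOn.continuousAt (ball_mem_nhds 0 one_pos)
  simpa only [hh_zero, div_one] using eq_apply_zero_of_apply_mul_eq hq hcont
    (fun x hx => integral_askeyWilsonWeight_div_hh_mul hq hx) ha

end ContourShift

section AskeyWilson

variable {q a b c d : ℂ}

/-- The Askey–Wilson product
`(abcd; q)_∞ / ((ab, ac, ad, bc, bd, cd; q)_∞)`, grouped so that the factors on which a shift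
`c ↦ c * q` or `d ↦ d * q` acts separately come last. -/
noncomputable def askeyWilsonProduct (q a b c d : ℂ) : ℂ :=
  qp q (a * b * c * d) / (qp q (a * b) * qp q (c * d)) /
    (qp q (a * c) * qp q (b * c) * (qp q (a * d) * qp q (b * d)))

lemma qp_mul_ne_zero (hq : ‖q‖ < 1) (ha : ‖a‖ < 1) (hb : ‖b‖ < 1) : qp q (a * b) ≠ 0 :=
  qp_ne_zero hq (norm_mul_lt_one ha hb)

lemma qp_mul_eq_one_sub_mul_qp (hq : ‖q‖ < 1) (a c : ℂ) :
    qp q (a * c) = (1 - a * c) * qp q (a * (c * q)) := by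
  rw [qp_eq_one_sub_mul_qp hq (a * c), mul_assoc]

theorem isContiguous_askeyWilsonProduct (hq : ‖q‖ < 1) (ha : ‖a‖ < 1) (hb : ‖b‖ < 1) :
    IsContiguous q (askeyWilsonProduct q a b) where
  symm c d := by
    rw [askeyWilsonProduct, askeyWilsonProduct, mul_right_comm (a * b) c d, mul_comm c d,
      mul_comm (qp q (a * c) * _)]
  differentiableOn d hd := by
    have := differentiable_qp hq
    unfold askeyWilsonProduct
    refine ((DifferentiableOn.div (by fun_prop) (by fun_prop) ?_).div (by fun_prop)) ?_ <;>
    · intro c hc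
      rw [mem_ball_zero_iff] at hc
      simp [qp_mul_ne_zero hq, ha, hb, hc, hd]
  relation c d hc hd := by
    have hshift (x : ℂ) : qp q (a * x) * qp q (b * x)
        = (1 - a * x) * (1 - b * x) * (qp q (a * (x * q)) * qp q (b * (x * q))) := by
      rw [qp_mul_eq_one_sub_mul_qp hq a, qp_mul_eq_one_sub_mul_qp hq b]
      ring
    refine contiguous_relation_div (P := fun x => qp q (a * x) * qp q (b * x))
      (N := fun c d => qp q (a * b * c * d) / (qp q (a * b) * qp q (c * d)))
      (p := fun x => (1 - a * x) * (1 - b * x)) (hshift c) (hshift d)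
      (mul_ne_zero (qp_mul_ne_zero hq ha hc) (qp_mul_ne_zero hq hb hc))
      (mul_ne_zero (qp_mul_ne_zero hq ha hd) (qp_mul_ne_zero hq hb hd)) ?_
    have hcd := one_sub_ne_zero_of_norm_lt_one (norm_mul_lt_one hc hd)
    simp only [qp_eq_one_sub_mul_qp hq (a * b * c * d), qp_eq_one_sub_mul_qp hq (c * d),
      ← mul_assoc, mul_right_comm _ q d]
    generalize 1 - c * d = r at hcd ⊢
    field_simp
    ring

lemma askeyWilsonProduct_zero_right (q a b c : ℂ) :
    askeyWilsonProduct q a b c 0 = askeyWilsonProduct q 0 a b c := by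
  simp only [askeyWilsonProduct, mul_zero, zero_mul, qp_zero_right, mul_one, one_mul, div_div]
  ring

lemma integral_askeyWilsonWeight_div_eq_mul (hq : ‖q‖ < 1) (ha : ‖a‖ < 1) (hb : ‖b‖ < 1)
    (hc : ‖c‖ < 1) (hd : ‖d‖ < 1) :
    ∫ θ in (0 : ℝ)..Real.pi,
        askeyWilsonWeight q θ / hh q θ a / hh q θ b / (hh q θ c * hh q θ d)
      = (∫ θ in (0 : ℝ)..Real.pi, askeyWilsonWeight q θ) * askeyWilsonProduct q a b c d := by
  have hW := continuous_askeyWilsonWeight hq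
  have h0 : ‖(0 : ℂ)‖ < 1 := by simp
  have hS {x y : ℂ} (hx : ‖x‖ < 1) (hy : ‖y‖ < 1) :=
    (isContiguous_askeyWilsonProduct hq hx hy).const_mul
      (∫ θ in (0 : ℝ)..Real.pi, askeyWilsonWeight q θ)
  have two_params {x y : ℂ} (hx : ‖x‖ < 1) (hy : ‖y‖ < 1) :=
    integral_div_hh_mul_hh_eq hq hW (hS h0 h0) (fun z hz => by
      rw [integral_askeyWilsonWeight_div_hh hq hz]
      simp [askeyWilsonProduct, qp_zero_right]) hx hy
  have three_params {x y z : ℂ} (hx : ‖x‖ < 1) (hy : ‖y‖ < 1) (hz : ‖z‖ < 1) :=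
    integral_div_hh_mul_hh_eq hq (continuous_div_hh hq hW hx) (hS h0 hx) (fun w hw => by
      simpa only [div_div, askeyWilsonProduct_zero_right] using two_params hx hw) hy hz
  exact integral_div_hh_mul_hh_eq hq (continuous_div_hh hq (continuous_div_hh hq hW ha) hb)
    (hS ha hb) (fun w hw => by
      simpa only [div_div, mul_assoc, askeyWilsonProduct_zero_right] using three_params ha hb hw)
    hc hd

lemma norm_lt_one_of_sq_eq {u : ℂ} (hq : ‖q‖ < 1) (hu : u ^ 2 = q) : ‖u‖ < 1 :=
  (pow_lt_one_iff_of_nonneg (norm_nonneg u) two_ne_zero).1 <| by rwa [← norm_pow, hu]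

lemma askeyWilsonProduct_neg_sqrt_neg {u : ℂ} (hq : ‖q‖ < 1) (hu : u ^ 2 = q) :
    askeyWilsonProduct q q (-q) u (-u) = qp q q := by
  have hqneg : ‖-q‖ < 1 := by rwa [norm_neg]
  have hu1 := norm_lt_one_of_sq_eq hq hu
  have hs := qp_mul_ne_zero hq hu1 hq
  have ht := qp_mul_ne_zero hq (by rwa [norm_neg] : ‖-u‖ < 1) hq
  have hm := qp_mul_ne_zero hq hqneg hq
  have hq1 := one_sub_ne_zero_of_norm_lt_one hqneg
  have euler := qp_mul_qp_neg_mul_qp_neg_sq hq hu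
  rw [qp_eq_one_sub_mul_qp hq u, qp_eq_one_sub_mul_qp hq (-u),
    qp_eq_one_sub_mul_qp hq (-q)] at euler
  rw [askeyWilsonProduct, show q * -q * u * -u = q * q * q by rw [← hu]; ring,
    show u * -u = -q by rw [← hu]; ring, show q * -q = -q * q by ring, neg_mul_comm q u,
    neg_mul_neg, mul_comm q u, mul_comm q (-u), qp_eq_one_sub_mul_qp hq (-q),
    qp_eq_one_sub_mul_qp hq q, qp_eq_one_sub_mul_qp hq (q * q)]
  generalize qp q (u * q) = s at *
  generalize qp q (-u * q) = t at *
  generalize qp q (-q * q) = m at *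
  generalize qp q (q * q * q) = X at *
  have hstm : (1 - q) * (1 + q) * (s * t * m) = 1 := by
    linear_combination euler + (1 + q) * s * t * m * hu
  rw [div_div, div_eq_iff (by simp only [ne_eq, mul_eq_zero]; tauto)]
  linear_combination (-X * ((1 - q) * (1 + q) * (s * t * m) + 1)) * hstm

lemma askeyWilsonWeight_div_eq_sin_sq {u : ℂ} (hq : ‖q‖ < 1) (hu : u ^ 2 = q) (θ : ℝ) :
    askeyWilsonWeight q θ / hh q θ q / hh q θ (-q) / (hh q θ u * hh q θ (-u))
      = (4 * Real.sin θ ^ 2 : ℝ) := by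
  have hu1 := norm_lt_one_of_sq_eq hq hu
  have hu_ne := hh_ne_zero hq hu1 θ
  have hu_neg_ne := hh_ne_zero hq (by rwa [norm_neg] : ‖-u‖ < 1) θ
  have hq_ne := hh_ne_zero hq hq θ
  have hq_neg_ne := hh_ne_zero hq (by rwa [norm_neg] : ‖-q‖ < 1) θ
  rw [← hh_mul_hh_neg_mul_hh_mul_hh_neg hq hu, hh_eq_mul_hh hq θ 1, hh_eq_mul_hh hq θ (-1), one_mul,
    neg_one_mul]
  field_simp
  push_cast
  linear_combination -4 * Complex.sin_sq_add_cos_sq θ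

lemma integral_askeyWilsonWeight (hq : ‖q‖ < 1) :
    ∫ θ in (0 : ℝ)..Real.pi, askeyWilsonWeight q θ = 2 * Real.pi / qp q q := by
  obtain ⟨u, hu⟩ := IsAlgClosed.exists_pow_nat_eq q two_pos
  have hu1 := norm_lt_one_of_sq_eq hq hu
  have hsin : ∫ θ in (0 : ℝ)..Real.pi, ((4 * Real.sin θ ^ 2 : ℝ) : ℂ) = 2 * Real.pi := by
    rw [intervalIntegral.integral_ofReal, intervalIntegral.integral_const_mul, integral_sin_sq]
    push_cast
    simp
    ring
  have h := integral_askeyWilsonWeight_div_eq_mul hq hq (by rwa [norm_neg] : ‖-q‖ < 1) hu1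
    (by rwa [norm_neg] : ‖-u‖ < 1)
  simp only [askeyWilsonWeight_div_eq_sin_sq hq hu] at h
  rw [hsin, askeyWilsonProduct_neg_sqrt_neg hq hu] at h
  exact (eq_div_iff (qp_ne_zero hq hq)).2 h.symm

theorem askeyWilson_integral (hq : ‖q‖ < 1) (ha : ‖a‖ < 1) (hb : ‖b‖ < 1) (hc : ‖c‖ < 1)
    (hd : ‖d‖ < 1) :
    ∫ θ in (0 : ℝ)..Real.pi,
        askeyWilsonWeight q θ / hh q θ a / hh q θ b / (hh q θ c * hh q θ d)
      = 2 * Real.pi / qp q q * askeyWilsonProduct q a b c d := by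
  rw [integral_askeyWilsonWeight_div_eq_mul hq ha hb hc hd, integral_askeyWilsonWeight hq]

end AskeyWilson

section IsmailStantonViennot

variable {q a b c d f : ℂ}

/-- The coefficient `(ab, ac, bc; q)_k / (q; q)_k` of the Ismail–Stanton–Viennot series, which is
independent of `d` and `f`. -/
noncomputable def isvCoeff (q a b c : ℂ) (k : ℕ) : ℂ :=
  qpn q (a * b) k * qpn q (a * c) k * qpn q (b * c) k / qpn q q k

/-- The `k`-th term of the Ismail–Stanton–Viennot `₃φ₂` series multiplied by
`(abcd, abcf; q)_∞`, so that no denominator depends on `d` or `f`. -/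
noncomputable def isvTerm (q a b c d f : ℂ) (k : ℕ) : ℂ :=
  isvCoeff q a b c k * (qp q (a * b * c * d * q ^ k) * qp q (a * b * c * f * q ^ k)) * (d * f) ^ k

/-- The value of the Ismail–Stanton–Viennot integral divided by `2π / (q; q)_∞`, as a series. -/
noncomputable def isvSum (q a b c d f : ℂ) : ℂ :=
  (∑' k, isvTerm q a b c d f k) / (qp q (a * b) * qp q (a * c) * qp q (b * c)) /
    (qp q (a * d) * qp q (b * d) * qp q (c * d) * (qp q (a * f) * qp q (b * f) * qp q (c * f)))

lemma isvCoeff_succ (hq : ‖q‖ < 1) (a b c : ℂ) (k : ℕ) :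
    (1 - q ^ (k + 1)) * isvCoeff q a b c (k + 1)
      = (1 - a * b * q ^ k) * (1 - a * c * q ^ k) * (1 - b * c * q ^ k) * isvCoeff q a b c k := by
  have hqk := one_sub_ne_zero_of_norm_lt_one (norm_mul_pow_lt_one hq hq k)
  have hqpn := qpn_ne_zero hq hq k
  simp only [isvCoeff, qpn_succ, pow_succ' q k]
  field_simp

lemma exists_norm_isvCoeff_le (hq : ‖q‖ < 1) (a b c : ℂ) :
    ∃ M, ∀ k, ‖isvCoeff q a b c k‖ ≤ M := by
  have hlim := (((tendsto_qpn_qp hq (a * b)).mul (tendsto_qpn_qp hq (a * c))).mul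
    (tendsto_qpn_qp hq (b * c))).div (tendsto_qpn_qp hq q) (qp_ne_zero hq hq)
  obtain ⟨M, hM⟩ := hlim.norm.bddAbove_range
  exact ⟨M, fun k => hM ⟨k, rfl⟩⟩

lemma exists_norm_isvTerm_le (hq : ‖q‖ < 1) (ha : ‖a‖ < 1) (hb : ‖b‖ < 1) (hc : ‖c‖ < 1) :
    ∃ M, ∀ d f, ‖d‖ < 1 → ‖f‖ < 1 → ∀ k, ‖isvTerm q a b c d f k‖ ≤ M * ‖f‖ ^ k := by
  obtain ⟨M, hM⟩ := exists_norm_isvCoeff_le hq a b c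
  obtain ⟨B, hB⟩ := (isCompact_closedBall (0 : ℂ) 1).exists_bound_of_continuousOn
    (differentiable_qp hq).continuous.continuousOn
  have habc := norm_mul_lt_one (norm_mul_lt_one ha hb) hc
  have hqp {x : ℂ} (hx : ‖x‖ < 1) (k : ℕ) : ‖qp q (a * b * c * x * q ^ k)‖ ≤ B :=
    hB _ (mem_closedBall_zero_iff.2 (norm_mul_pow_lt_one hq (norm_mul_lt_one habc hx) k).le)
  refine ⟨M * (B * B), fun d f hd hf k => ?_⟩
  have hM0 : 0 ≤ M := (norm_nonneg _).trans (hM k)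
  have hB0 : 0 ≤ B := (norm_nonneg _).trans (hqp hd k)
  rw [isvTerm, norm_mul, norm_mul, norm_mul, norm_pow, norm_mul d]
  gcongr
  · exact hM k
  · exact hqp hd k
  · exact hqp hf k
  · exact mul_le_of_le_one_left (norm_nonneg f) hd.le

lemma summable_isvTerm (hq : ‖q‖ < 1) (ha : ‖a‖ < 1) (hb : ‖b‖ < 1) (hc : ‖c‖ < 1)
    (hd : ‖d‖ < 1) (hf : ‖f‖ < 1) : Summable (isvTerm q a b c d f) := by
  obtain ⟨M, hM⟩ := exists_norm_isvTerm_le hq ha hb hc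
  exact .of_norm_bounded ((summable_geometric_of_lt_one (norm_nonneg f) hf).mul_left M)
    (hM d f hd hf)

lemma isvTerm_comm (q a b c d f : ℂ) : isvTerm q a b c d f = isvTerm q a b c f d := by
  funext k
  rw [isvTerm, isvTerm, mul_comm d f, mul_comm (qp q _)]

lemma tsum_isvTerm_zero_right (q a b c d : ℂ) :
    ∑' k, isvTerm q a b c d 0 k = qp q (a * b * c * d) := by
  rw [tsum_eq_single 0 fun k hk => by simp [isvTerm, hk]]
  simp [isvTerm, isvCoeff, qpn, qp_zero_right]

lemma isvTerm_contiguous_eq_sub (hq : ‖q‖ < 1) (a b c d f : ℂ) (k : ℕ) :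
    f * ((1 - a * d) * (1 - b * d) * (1 - c * d)) * isvTerm q a b c (d * q) f k
      - d * ((1 - a * f) * (1 - b * f) * (1 - c * f)) * isvTerm q a b c d (f * q) k
      - (f - d) * (1 - d * f) * isvTerm q a b c d f k
      = (f - d) * ((1 - q ^ (k + 1)) * isvTerm q a b c d f (k + 1))
        - (f - d) * ((1 - q ^ k) * isvTerm q a b c d f k) := by
  have hshift (x : ℂ) : a * b * c * (x * q) * q ^ k = a * b * c * x * q ^ k * q := by ring
  have hcoeff := isvCoeff_succ hq a b c k
  simp only [isvTerm, hshift, pow_succ q k, ← mul_assoc _ (q ^ k) q] at hcoeff ⊢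
  rw [qp_eq_one_sub_mul_qp hq (a * b * c * d * q ^ k),
    qp_eq_one_sub_mul_qp hq (a * b * c * f * q ^ k), mul_right_comm d q f, ← mul_assoc d f q,
    mul_pow _ q k, pow_succ (d * f) k]
  generalize qp q (a * b * c * d * q ^ k * q) = X
  generalize qp q (a * b * c * f * q ^ k * q) = Y
  linear_combination (-(f - d) * X * Y * (d * f) ^ k * (d * f)) * hcoeff

lemma eq_sub_of_tendsto_of_hasSum {G : Type*} [AddCommGroup G] [TopologicalSpace G]
    [ContinuousSub G] [T2Space G] {U : ℕ → G} {s l : G} (hl : Tendsto U atTop (𝓝 l))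
    (hs : HasSum (fun k => U (k + 1) - U k) s) : s = l - U 0 := by
  have hpartial := hs.tendsto_sum_nat
  simp only [Finset.sum_range_sub] at hpartial
  exact tendsto_nhds_unique hpartial (hl.sub_const (U 0))

lemma tsum_isvTerm_contiguous (hq : ‖q‖ < 1) (ha : ‖a‖ < 1) (hb : ‖b‖ < 1) (hc : ‖c‖ < 1)
    (hd : ‖d‖ < 1) (hf : ‖f‖ < 1) :
    f * ((1 - a * d) * (1 - b * d) * (1 - c * d)) * ∑' k, isvTerm q a b c (d * q) f k
      - d * ((1 - a * f) * (1 - b * f) * (1 - c * f)) * ∑' k, isvTerm q a b c d (f * q) k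
      = (f - d) * (1 - d * f) * ∑' k, isvTerm q a b c d f k := by
  have hsum := summable_isvTerm hq ha hb hc hd hf
  have hsum_d := summable_isvTerm hq ha hb hc (norm_mul_lt_one hd hq) hf
  have hsum_f := summable_isvTerm hq ha hb hc hd (norm_mul_lt_one hf hq)
  have hlim : Tendsto (fun k => (f - d) * ((1 - q ^ k) * isvTerm q a b c d f k)) atTop (𝓝 0) := by
    simpa using (((tendsto_pow_atTop_nhds_zero_of_norm_lt_one hq).const_sub 1).mul
      hsum.tendsto_atTop_zero).const_mul (f - d)
  have htelescope :=
    ((hsum_d.hasSum.mul_left (f * ((1 - a * d) * (1 - b * d) * (1 - c * d)))).sub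
      (hsum_f.hasSum.mul_left (d * ((1 - a * f) * (1 - b * f) * (1 - c * f))))).sub
      (hsum.hasSum.mul_left ((f - d) * (1 - d * f)))
  simp only [isvTerm_contiguous_eq_sub hq] at htelescope
  have hzero := eq_sub_of_tendsto_of_hasSum hlim htelescope
  rw [pow_zero, sub_self, zero_mul, mul_zero, sub_zero] at hzero
  exact sub_eq_zero.1 hzero

lemma isvSum_zero_right (q a b c d : ℂ) :
    isvSum q a b c d 0 = askeyWilsonProduct q a b c d := by
  simp only [isvSum, askeyWilsonProduct, tsum_isvTerm_zero_right, mul_zero, qp_zero_right, mul_one,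
    div_div]
  ring

lemma differentiableOn_tsum_isvTerm (hq : ‖q‖ < 1) (ha : ‖a‖ < 1) (hb : ‖b‖ < 1) (hc : ‖c‖ < 1)
    (hf : ‖f‖ < 1) :
    DifferentiableOn ℂ (fun d => ∑' k, isvTerm q a b c d f k) (ball 0 1) := by
  obtain ⟨M, hM⟩ := exists_norm_isvTerm_le hq ha hb hc
  refine differentiableOn_tsum_of_summable_norm
    ((summable_geometric_of_lt_one (norm_nonneg f) hf).mul_left M) (fun k => ?_) isOpen_ball
    fun k d hd => hM d f (mem_ball_zero_iff.1 hd) hf k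
  have := differentiable_qp hq
  unfold isvTerm
  fun_prop

theorem isContiguous_isvSum (hq : ‖q‖ < 1) (ha : ‖a‖ < 1) (hb : ‖b‖ < 1) (hc : ‖c‖ < 1) :
    IsContiguous q (isvSum q a b c) where
  symm d f := by
    rw [isvSum, isvSum, isvTerm_comm, mul_comm (qp q (a * d) * _ * _)]
  differentiableOn f hf := by
    have := differentiable_qp hq
    have := differentiableOn_tsum_isvTerm hq ha hb hc hf
    unfold isvSum
    refine (this.div_const _).div (by fun_prop) fun d hd => ?_
    rw [mem_ball_zero_iff] at hd
    simp [qp_mul_ne_zero hq, ha, hb, hc, hd, hf]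
  relation d f hd hf := by
    have hshift (x : ℂ) : qp q (a * x) * qp q (b * x) * qp q (c * x)
        = (1 - a * x) * (1 - b * x) * (1 - c * x)
          * (qp q (a * (x * q)) * qp q (b * (x * q)) * qp q (c * (x * q))) := by
      rw [qp_mul_eq_one_sub_mul_qp hq a, qp_mul_eq_one_sub_mul_qp hq b,
        qp_mul_eq_one_sub_mul_qp hq c]
      ring
    have hne {x : ℂ} (hx : ‖x‖ < 1) : qp q (a * x) * qp q (b * x) * qp q (c * x) ≠ 0 := by
      simp [qp_mul_ne_zero hq, ha, hb, hc, hx]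
    refine contiguous_relation_div (P := fun x => qp q (a * x) * qp q (b * x) * qp q (c * x))
      (N := fun d f => (∑' k, isvTerm q a b c d f k) / (qp q (a * b) * qp q (a * c) * qp q (b * c)))
      (p := fun x => (1 - a * x) * (1 - b * x) * (1 - c * x)) (hshift d) (hshift f) (hne hd)
      (hne hf) ?_
    linear_combination (qp q (a * b) * qp q (a * c) * qp q (b * c))⁻¹ *
      tsum_isvTerm_contiguous hq ha hb hc hd hf

theorem integral_askeyWilsonWeight_div_eq_isvSum (hq : ‖q‖ < 1) (ha : ‖a‖ < 1) (hb : ‖b‖ < 1)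
    (hc : ‖c‖ < 1) (hd : ‖d‖ < 1) (hf : ‖f‖ < 1) :
    ∫ θ in (0 : ℝ)..Real.pi,
        askeyWilsonWeight q θ / hh q θ a / hh q θ b / hh q θ c / (hh q θ d * hh q θ f)
      = 2 * Real.pi / qp q q * isvSum q a b c d f := by
  have hW := continuous_div_hh hq (continuous_div_hh hq (continuous_div_hh hq
    (continuous_askeyWilsonWeight hq) ha) hb) hc
  refine integral_div_hh_mul_hh_eq hq hW ((isContiguous_isvSum hq ha hb hc).const_mul _)
    (fun x hx => ?_) hd hf
  rw [isvSum_zero_right, ← askeyWilson_integral hq ha hb hc hx]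
  simp only [div_div, mul_assoc]

lemma tsum_isvTerm_eq_mul_tsum (hq : ‖q‖ < 1) (hd : ‖a * b * c * d‖ < 1)
    (hf : ‖a * b * c * f‖ < 1) :
    ∑' k, isvTerm q a b c d f k
      = qp q (a * b * c * d) * qp q (a * b * c * f) *
        ∑' k : ℕ, (qpn q (a * b) k * qpn q (a * c) k * qpn q (b * c) k) /
            (qpn q q k * qpn q (a * b * c * d) k * qpn q (a * b * c * f) k) * (d * f) ^ k := by
  rw [← tsum_mul_left]
  refine tsum_congr fun k => ?_
  have hd_ne := qpn_ne_zero hq hd k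
  have hf_ne := qpn_ne_zero hq hf k
  have hq_ne := qpn_ne_zero hq hq k
  rw [isvTerm, isvCoeff, qp_eq_qpn_mul_qp hq (a * b * c * d) k,
    qp_eq_qpn_mul_qp hq (a * b * c * f) k]
  field_simp

end IsmailStantonViennot

/-- The Ismail–Stanton–Viennot integral. -/
theorem ismail_stanton_viennot_integral (q u a b c d f : ℂ) (hq : ‖q‖ < 1) (hu : u ^ 2 = q)
    (ha : ‖a‖ < 1) (hb : ‖b‖ < 1) (hc : ‖c‖ < 1) (hd : ‖d‖ < 1) (hf : ‖f‖ < 1) :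
    ∫ θ in (0:ℝ)..Real.pi,
      (hh q θ 1 * hh q θ (-1) * hh q θ u * hh q θ (-u)) /
        (hh q θ a * hh q θ b * hh q θ c * hh q θ d * hh q θ f)
      = 2 * (Real.pi : ℂ) * (qp q (a * b * c * d) * qp q (a * b * c * f)) /
          (qp q q * qp q (a * b) * qp q (a * c) * qp q (a * d) * qp q (a * f) *
            qp q (b * c) * qp q (b * d) * qp q (b * f) * qp q (c * d) * qp q (c * f)) *
        ∑' k : ℕ, (qpn q (a * b) k * qpn q (a * c) k * qpn q (b * c) k) /
            (qpn q q k * qpn q (a * b * c * d) k * qpn q (a * b * c * f) k) * (d * f) ^ k := by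
  have habc := norm_mul_lt_one (norm_mul_lt_one ha hb) hc
  have hsum := tsum_isvTerm_eq_mul_tsum hq (norm_mul_lt_one habc hd) (norm_mul_lt_one habc hf)
  have hint := integral_askeyWilsonWeight_div_eq_isvSum hq ha hb hc hd hf
  simp only [isvSum, hsum, ← hh_mul_hh_neg_mul_hh_mul_hh_neg hq hu, div_div, ← mul_assoc] at hint
  rw [hint]
  simp only [div_eq_mul_inv, mul_inv]
  ring
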